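/- Let k be a field, G a group, S ⊆ G a submonoid, and M a module over the monoid algebra k[S] equipped with a G-grading: an internal direct sum decomposition M = ⊕_{a ∈ G} M_a into k-subspaces such that for every s ∈ S and a ∈ G the action of the basis element of k[S] corresponding to s maps M_a into M_{s·a}. If M is generated as a k[S]-module by n homogeneous elements m_1 ∈ M_{x_1}, …, m_n ∈ M_{x_n}, then for every a ∈ G the homogeneous component M_a is a k-vector space of dimension at most n; in particular every homogeneous component of M is finite-dimensional over k. -/

import Mathlib

open scoped Pointwise

/-- Let `k` be a field, `G` a group, `S ⊆ G` a submonoid, and `M` a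
module over the monoid algebra `k[S]` equipped with a `G`-grading: an internal direct sum
decomposition `M = ⊕_{a ∈ G} M_a` into `k`-subspaces such that for every `s ∈ S` and
`a ∈ G` the action of the basis element of `k[S]` corresponding to `s` maps `M_a` into
`M_{s·a}`.  If `M` is generated as a `k[S]`-module by `n` homogeneous elements
`m_1 ∈ M_{x_1}, …, m_n ∈ M_{x_n}`, then for every `a ∈ G` the homogeneous component `M_a`
is a `k`-vector space of dimension at most `n`; in particular every homogeneous component
of `M` is finite-dimensional over `k`. -/
theorem graded_component_rank_le
    {k G M : Type*} [Field k] [Group G] [DecidableEq G] (S : Submonoid G)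
    [AddCommGroup M] [Module k M] [Module (MonoidAlgebra k ↥S) M]
    [IsScalarTower k (MonoidAlgebra k ↥S) M]
    (ℳ : G → Submodule k M) (hinternal : DirectSum.IsInternal ℳ)
    (hcompat : ∀ (s : ↥S) (a : G), ∀ m ∈ ℳ a,
      (MonoidAlgebra.of k ↥S s) • m ∈ ℳ ((s : G) * a))
    (n : ℕ) (mvec : Fin n → M) (x : Fin n → G)
    (hhom : ∀ i, mvec i ∈ ℳ (x i))
    (hgen : Submodule.span (MonoidAlgebra k ↥S) (Set.range mvec) = ⊤) :
    ∀ a : G, Module.rank k ↥(ℳ a) ≤ (n : Cardinal) := by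
  intro a
  classical
  let _ : DirectSum.Decomposition ℳ := hinternal.chooseDecomposition
  let v : Fin n → M := fun i =>
    if h : a * (x i)⁻¹ ∈ S then MonoidAlgebra.of k ↥S ⟨a * (x i)⁻¹, h⟩ • mvec i else 0
  let W : Submodule k M := Submodule.span k (Set.range v)
  let p : M →ₗ[k] M := (ℳ a).subtype ∘ₗ (DirectSum.component k G (fun g => ↥(ℳ g)) a) ∘ₗ
    (DirectSum.decomposeLinearEquiv ℳ).toLinearMap
  have hp : ∀ m, p m = ((DirectSum.decompose ℳ m) a : M) := fun m => rfl
  have hA : Submodule.span k (Set.range (MonoidAlgebra.of k ↥S)) = ⊤ := by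
    rw [eq_top_iff]
    intro r _
    induction r using MonoidAlgebra.induction_on with
    | of g => exact Submodule.subset_span ⟨g, rfl⟩
    | add f g hf hg => exact Submodule.add_mem _ (hf trivial) (hg trivial)
    | smul c f hf => exact Submodule.smul_mem _ c (hf trivial)
  have hspan : Submodule.span k
      (Set.range (MonoidAlgebra.of k ↥S) • Set.range mvec) = (⊤ : Submodule k M) := by
    rw [Submodule.span_smul_of_span_eq_top hA, hgen, Submodule.restrictScalars_top]
  have hW : (⊤ : Submodule k M) ≤ W.comap p := by
    rw [← hspan, Submodule.span_le]
    rintro _ ⟨_, ⟨s, rfl⟩, _, ⟨i, rfl⟩, rfl⟩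
    change p (MonoidAlgebra.of k ↥S s • mvec i) ∈ W
    have hm := hcompat s (x i) (mvec i) (hhom i)
    rw [hp]
    by_cases h : (s : G) * x i = a
    · rw [h] at hm
      rw [DirectSum.decompose_of_mem_same ℳ hm]
      refine Submodule.subset_span ⟨i, ?_⟩
      have hs : a * (x i)⁻¹ = s := by rw [← h]; group
      have hs' : a * (x i)⁻¹ ∈ S := hs ▸ s.2
      have : (⟨a * (x i)⁻¹, hs'⟩ : ↥S) = s := Subtype.ext hs
      simp only [v, dif_pos hs', this]
    · rw [DirectSum.decompose_of_mem_ne ℳ hm h]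
      exact W.zero_mem
  have hle : ℳ a ≤ W := by
    intro m hm
    have h := hW (Submodule.mem_top (x := m))
    rw [Submodule.mem_comap, hp, DirectSum.decompose_of_mem_same ℳ hm] at h
    exact h
  refine (Submodule.rank_mono hle).trans ((rank_span_le _).trans ?_)
  have := Cardinal.mk_range_le_lift (f := v)
  simpa using this
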